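/- A word w lies in C(12) if and only if every column C of P(w) satisfies: (a) if C has length 1 then its entry is 1 or 2, and moreover singleton columns with entry 1 and singleton columns with entry 2 both exist whenever any singleton column exists; (b) if C has length at least 2 then C contains both a 1 and a 2. -/

import Mathlib

namespace Plactic

/-- Insert `x` into a weakly increasing row, returning the new row and the bumped entry. -/
def rowInsert (x : ℕ) : List ℕ → List ℕ × Option ℕ
  | [] => ([x], none)
  | y :: ys =>
    if x < y then (x :: ys, some y)
    else
      let p := rowInsert x ys
      (y :: p.1, p.2)

/-- RSK insertion of `x` into a tableau given as a list of rows. -/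
def tInsert (x : ℕ) : List (List ℕ) → List (List ℕ)
  | [] => [[x]]
  | r :: rs =>
    match rowInsert x r with
    | (r', none) => r' :: rs
    | (r', some y) => r' :: tInsert y rs

/-- The RSK insertion tableau of a word. -/
def P (w : List ℕ) : List (List ℕ) := w.foldl (fun t x => tInsert x t) []

/-- The `i`-th row (0-indexed) of the insertion tableau of `w`. -/
def row (w : List ℕ) (i : ℕ) : List ℕ := (P w).getD i []

/-- The `j`-th column (0-indexed) of a tableau, read top to bottom. -/
def col (T : List (List ℕ)) (j : ℕ) : List ℕ := T.filterMap (fun r => r[j]?)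

/-- An elementary Knuth transposition. -/
inductive KStep : List ℕ → List ℕ → Prop
  | k1 (x y : List ℕ) (a b c : ℕ) : a ≤ b → b < c →
      KStep (x ++ [a, c, b] ++ y) (x ++ [c, a, b] ++ y)
  | k2 (x y : List ℕ) (a b c : ℕ) : a < b → b ≤ c →
      KStep (x ++ [b, a, c] ++ y) (x ++ [b, c, a] ++ y)

/-- Knuth equivalence: the equivalence relation generated by Knuth transpositions. -/
def KEquiv : List ℕ → List ℕ → Prop := Relation.EqvGen KStep

/-- The centralizer of `u` in the plactic monoid. -/
def Cent (u : List ℕ) : Set (List ℕ) := {w | KEquiv (u ++ w) (w ++ u)}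


@[simp] theorem rowInsert_nil (x : ℕ) : rowInsert x [] = ([x], none) := rfl

theorem rowInsert_cons_of_lt {x y : ℕ} (h : x < y) (r : List ℕ) :
    rowInsert x (y :: r) = (x :: r, some y) := by
  simp [rowInsert, h]

theorem rowInsert_cons_of_le {x y : ℕ} (h : y ≤ x) (r : List ℕ) :
    rowInsert x (y :: r) = (y :: (rowInsert x r).1, (rowInsert x r).2) := by
  simp [rowInsert, h]

/-- Successive insertion of the letters of a word into a row: the final row together with the
word of bumped letters. -/
def rowInsertWord : List ℕ → List ℕ → List ℕ × List ℕ
  | r, [] => (r, [])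
  | r, x :: w =>
    ((rowInsertWord (rowInsert x r).1 w).1,
      (rowInsert x r).2.toList ++ (rowInsertWord (rowInsert x r).1 w).2)

/-- Successive insertion of the letters of a word into a tableau. -/
def tInsertWord (T : List (List ℕ)) (w : List ℕ) : List (List ℕ) :=
  w.foldl (fun t x => tInsert x t) T

/-- The entries of the row `s` may be placed below those of `r` with strictly increasing
columns. -/
def Dominates : List ℕ → List ℕ → Prop
  | _, [] => True
  | [], _ :: _ => False
  | x :: r, y :: s => x < y ∧ Dominates r s

/-- Semistandard tableaux, given as lists of rows. -/
def IsTableau : List (List ℕ) → Prop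
  | [] => True
  | r :: S => r.Pairwise (· ≤ ·) ∧ Dominates r (S.headD []) ∧ IsTableau S ∧ r ≠ []

/-- The row reading word of a tableau. -/
def reading : List (List ℕ) → List ℕ
  | [] => []
  | r :: S => reading S ++ r

@[simp] theorem rowInsertWord_nil (r : List ℕ) : rowInsertWord r [] = (r, []) := rfl

@[simp] theorem rowInsertWord_cons (r : List ℕ) (x : ℕ) (w : List ℕ) :
    rowInsertWord r (x :: w) = ((rowInsertWord (rowInsert x r).1 w).1,
      (rowInsert x r).2.toList ++ (rowInsertWord (rowInsert x r).1 w).2) := rfl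

@[simp] theorem dominates_nil (r : List ℕ) : Dominates r [] := by cases r <;> trivial

@[simp] theorem dominates_nil_cons (y : ℕ) (s : List ℕ) : ¬ Dominates [] (y :: s) := id

@[simp] theorem dominates_cons (x y : ℕ) (r s : List ℕ) :
    Dominates (x :: r) (y :: s) ↔ x < y ∧ Dominates r s := Iff.rfl

theorem mem_of_mem_rowInsert {x z : ℕ} {r : List ℕ} (h : z ∈ (rowInsert x r).1) :
    z = x ∨ z ∈ r := by
  induction r with
  | nil => simpa using h
  | cons y r ih =>
    rcases lt_or_ge x y with hxy | hxy
    · rw [rowInsert_cons_of_lt hxy] at h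
      simp at h ⊢; tauto
    · rw [rowInsert_cons_of_le hxy] at h
      simp at h ⊢; tauto

theorem self_mem_rowInsert (x : ℕ) (r : List ℕ) : x ∈ (rowInsert x r).1 := by
  induction r with
  | nil => simp
  | cons y r ih =>
    rcases lt_or_ge x y with hxy | hxy
    · simp [rowInsert_cons_of_lt hxy]
    · simp [rowInsert_cons_of_le hxy, ih]

theorem bump_mem {x z : ℕ} {r : List ℕ} (h : (rowInsert x r).2 = some z) : x < z ∧ z ∈ r := by
  induction r with
  | nil => simp at h
  | cons y r ih =>
    rcases lt_or_ge x y with hxy | hxy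
    · simp [rowInsert_cons_of_lt hxy] at h
      subst h; simp [hxy]
    · rw [rowInsert_cons_of_le hxy] at h
      simp [ih h]

theorem rowInsert_sorted {r : List ℕ} (hr : r.Pairwise (· ≤ ·)) (x : ℕ) :
    (rowInsert x r).1.Pairwise (· ≤ ·) := by
  induction r with
  | nil => simp
  | cons y r ih =>
    rw [List.pairwise_cons] at hr
    rcases lt_or_ge x y with hxy | hxy
    · rw [rowInsert_cons_of_lt hxy]
      exact List.pairwise_cons.2 ⟨fun z hz => hxy.le.trans (hr.1 z hz), hr.2⟩
    · rw [rowInsert_cons_of_le hxy]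
      refine List.pairwise_cons.2 ⟨fun z hz => ?_, ih hr.2⟩
      rcases mem_of_mem_rowInsert hz with rfl | h
      · exact hxy
      · exact hr.1 z h

/-- Inserting a letter smaller than an entry `c` of a sorted row bumps an entry at most `c`. -/
theorem exists_bump_of_mem {b c : ℕ} {r : List ℕ} (hr : r.Pairwise (· ≤ ·)) (hc : c ∈ r)
    (hbc : b < c) : ∃ z, (rowInsert b r).2 = some z ∧ z ≤ c := by
  induction r with
  | nil => simp at hc
  | cons y r ih =>
    rw [List.pairwise_cons] at hr
    rcases lt_or_ge b y with hby | hby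
    · refine ⟨y, by simp [rowInsert_cons_of_lt hby], ?_⟩
      rcases List.mem_cons.1 hc with rfl | h
      · exact le_rfl
      · exact hr.1 c h
    · rcases List.mem_cons.1 hc with rfl | h
      · omega
      · rw [rowInsert_cons_of_le hby]
        exact ih hr.2 h

/-- Letters bumped by successive insertion of `b ≤ c` into a sorted row weakly increase. -/
theorem exists_bump_of_bump {b c z : ℕ} {r : List ℕ} (hr : r.Pairwise (· ≤ ·)) (hbc : b ≤ c)
    (h : (rowInsert c (rowInsert b r).1).2 = some z) :
    ∃ z', (rowInsert b r).2 = some z' ∧ z' ≤ z := by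
  induction r with
  | nil => simp [rowInsert, not_lt.2 hbc] at h
  | cons y r ih =>
    rw [List.pairwise_cons] at hr
    rcases lt_or_ge b y with hby | hby
    · refine ⟨y, by simp [rowInsert_cons_of_lt hby], ?_⟩
      rw [rowInsert_cons_of_lt hby, rowInsert_cons_of_le hbc] at h
      exact hr.1 z (bump_mem h).2
    · rw [rowInsert_cons_of_le hby] at h ⊢
      rw [rowInsert_cons_of_le (hby.trans hbc)] at h
      exact ih hr.2 h

/-- Elementary Knuth transpositions on three-letter words. -/
inductive KnuthTriple : List ℕ → List ℕ → Prop
  | k1 (a b c : ℕ) : a ≤ b → b < c → KnuthTriple [a, c, b] [c, a, b]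
  | k2 (a b c : ℕ) : a < b → b ≤ c → KnuthTriple [b, a, c] [b, c, a]

theorem rowInsertWord_cons_of_le {y : ℕ} {w : List ℕ} (hw : ∀ x ∈ w, y ≤ x) (r : List ℕ) :
    rowInsertWord (y :: r) w = (y :: (rowInsertWord r w).1, (rowInsertWord r w).2) := by
  induction w generalizing r with
  | nil => rfl
  | cons x w ih =>
    rw [rowInsertWord_cons, rowInsert_cons_of_le (hw x (by simp)),
      ih (fun z hz => hw z (by simp [hz]))]
    rfl

theorem rowInsertWord_k1 {a b c : ℕ} (hab : a ≤ b) (hbc : b < c) {r : List ℕ}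
    (hr : r.Pairwise (· ≤ ·)) :
    (rowInsertWord r [a, c, b]).1 = (rowInsertWord r [c, a, b]).1 ∧
      ((rowInsertWord r [a, c, b]).2 = (rowInsertWord r [c, a, b]).2 ∨
        KnuthTriple (rowInsertWord r [a, c, b]).2 (rowInsertWord r [c, a, b]).2 ∨
        KnuthTriple (rowInsertWord r [c, a, b]).2 (rowInsertWord r [a, c, b]).2) := by
  have hac := hab.trans_lt hbc
  induction r with
  | nil => simp [rowInsert, hab, hbc, hac, hac.le, not_lt.2]
  | cons y r ih =>
    rw [List.pairwise_cons] at hr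
    rcases le_or_gt y a with hya | hya
    · rw [rowInsertWord_cons_of_le (y := y) (by simp; omega),
        rowInsertWord_cons_of_le (y := y) (by simp; omega)]
      exact ⟨congrArg (y :: ·) (ih hr.2).1, (ih hr.2).2⟩
    rcases le_or_gt y c with hyc | hyc
    · simp only [rowInsertWord_cons, rowInsertWord_nil, rowInsert_cons_of_lt hya,
        rowInsert_cons_of_le hyc, rowInsert_cons_of_le hac.le, rowInsert_cons_of_le hab,
        List.append_nil, true_and]
      obtain ⟨z, hz, hzc⟩ := exists_bump_of_mem (rowInsert_sorted hr.2 c)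
        (self_mem_rowInsert c r) hbc
      have hyz : y ≤ z := by
        rcases mem_of_mem_rowInsert (bump_mem hz).2 with rfl | h
        · exact hyc
        · exact hr.1 z h
      rw [hz]
      rcases hc : (rowInsert c r).2 with _ | c'
      · simp
      · exact Or.inr (Or.inl (.k1 y z c' hyz (hzc.trans_lt (bump_mem hc).1)))
    · have hby := hbc.trans hyc
      rcases r with _ | ⟨z, r⟩
      · simp [rowInsert, hab, hbc, hac, hac.le, hya, hyc, not_lt.2]
      · have hyz : y ≤ z := hr.1 z (by simp)
        simp only [rowInsertWord_cons, rowInsertWord_nil, rowInsert_cons_of_lt hya,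
          rowInsert_cons_of_lt hyc, rowInsert_cons_of_le hac.le, rowInsert_cons_of_le hab,
          rowInsert_cons_of_lt hac, rowInsert_cons_of_lt (hyc.trans_le hyz),
          rowInsert_cons_of_lt (hby.trans_le hyz), rowInsert_cons_of_lt hbc, true_and]
        exact Or.inr (Or.inr (.k2 c y z hyc hyz))

theorem rowInsertWord_k2 {a b c : ℕ} (hab : a < b) (hbc : b ≤ c) {r : List ℕ}
    (hr : r.Pairwise (· ≤ ·)) :
    (rowInsertWord r [b, a, c]).1 = (rowInsertWord r [b, c, a]).1 ∧
      ((rowInsertWord r [b, a, c]).2 = (rowInsertWord r [b, c, a]).2 ∨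
        KnuthTriple (rowInsertWord r [b, a, c]).2 (rowInsertWord r [b, c, a]).2) := by
  have hac := hab.trans_le hbc
  induction r with
  | nil => simp [rowInsert, hab, hbc, hac.le, not_lt.2]
  | cons y r ih =>
    rw [List.pairwise_cons] at hr
    rcases le_or_gt y a with hya | hya
    · rw [rowInsertWord_cons_of_le (y := y) (by simp; omega),
        rowInsertWord_cons_of_le (y := y) (by simp; omega)]
      exact ⟨congrArg (y :: ·) (ih hr.2).1, (ih hr.2).2⟩
    rcases le_or_gt y b with hyb | hyb
    · simp only [rowInsertWord_cons, rowInsertWord_nil, rowInsert_cons_of_lt hya,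
        rowInsert_cons_of_le hyb, rowInsert_cons_of_le hac.le,
        rowInsert_cons_of_le (hyb.trans hbc), List.append_nil, true_and]
      rcases hc : (rowInsert c (rowInsert b r).1).2 with _ | c'
      · simp
      · obtain ⟨b', hb, hbc'⟩ := exists_bump_of_bump hr.2 hbc hc
        rw [hb]
        exact Or.inr (.k2 y b' c' (hyb.trans_lt (bump_mem hb).1) hbc')
    · simp only [rowInsertWord_cons, rowInsertWord_nil,
        rowInsert_cons_of_lt hyb, rowInsert_cons_of_le hbc, rowInsert_cons_of_lt hab,
        rowInsert_cons_of_le hac.le, List.append_nil, true_and]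
      rcases hc : (rowInsert c r).2 with _ | c'
      · simp
      · exact Or.inr (.k2 b y c' hyb (hr.1 c' (bump_mem hc).2))

@[simp] theorem tInsertWord_nil (T : List (List ℕ)) : tInsertWord T [] = T := rfl

theorem tInsertWord_append (T : List (List ℕ)) (u v : List ℕ) :
    tInsertWord T (u ++ v) = tInsertWord (tInsertWord T u) v := List.foldl_append

theorem P_append (u v : List ℕ) : P (u ++ v) = tInsertWord (P u) v := List.foldl_append

theorem tInsert_cons (x : ℕ) (r : List ℕ) (S : List (List ℕ)) :
    tInsert x (r :: S) =
      (rowInsert x r).1 :: tInsertWord S (rowInsert x r).2.toList := by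
  rw [tInsert]
  rcases rowInsert x r with ⟨r', _ | y⟩ <;> rfl

theorem tInsertWord_cons (r : List ℕ) (S : List (List ℕ)) (w : List ℕ) :
    tInsertWord (r :: S) w = (rowInsertWord r w).1 :: tInsertWord S (rowInsertWord r w).2 := by
  induction w generalizing r S with
  | nil => rfl
  | cons x w ih =>
    rw [show tInsertWord (r :: S) (x :: w) = tInsertWord (tInsert x (r :: S)) w from rfl,
      tInsert_cons, ih, rowInsertWord_cons, tInsertWord_append]

theorem tInsertWord_headD (S : List (List ℕ)) (w : List ℕ) :
    (tInsertWord S w).headD [] = (rowInsertWord (S.headD []) w).1 := by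
  rcases S with _ | ⟨r, S⟩
  · rcases w with _ | ⟨x, w⟩
    · rfl
    · rw [show tInsertWord [] (x :: w) = tInsertWord [[]] (x :: w) from rfl, tInsertWord_cons]
      rfl
  · rw [tInsertWord_cons]; rfl

theorem tInsertWord_knuthTriple {T : List (List ℕ)} (hT : IsTableau T) {u v : List ℕ}
    (h : KnuthTriple u v) : tInsertWord T u = tInsertWord T v := by
  induction T generalizing u v with
  | nil =>
    rcases h with ⟨a, b, c, hab, hbc⟩ | ⟨a, b, c, hab, hbc⟩
    · simp [tInsertWord, tInsert, rowInsert, hbc, hab.trans_lt hbc, hab,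
        (hab.trans_lt hbc).le, not_lt.2]
    · simp [tInsertWord, tInsert, rowInsert, hbc, hab, (hab.trans_le hbc).le, not_lt.2]
  | cons r S ih =>
    rw [tInsertWord_cons, tInsertWord_cons]
    rcases h with ⟨a, b, c, hab, hbc⟩ | ⟨a, b, c, hab, hbc⟩
    · obtain ⟨h1, h2 | h2 | h2⟩ := rowInsertWord_k1 hab hbc hT.1
      · rw [h1, h2]
      · rw [h1, ih hT.2.2.1 h2]
      · rw [h1, ih hT.2.2.1 h2]
    · obtain ⟨h1, h2 | h2⟩ := rowInsertWord_k2 hab hbc hT.1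
      · rw [h1, h2]
      · rw [h1, ih hT.2.2.1 h2]

theorem Dominates.rowInsert_left {r s : List ℕ} (h : Dominates r s) (x : ℕ) :
    Dominates (rowInsert x r).1 s := by
  induction r generalizing s with
  | nil => cases s <;> simp_all
  | cons y r ih =>
    rcases s with _ | ⟨z, s⟩
    · simp
    rcases lt_or_ge x y with hxy | hxy
    · rw [rowInsert_cons_of_lt hxy]
      exact ⟨hxy.trans h.1, h.2⟩
    · rw [rowInsert_cons_of_le hxy]
      exact ⟨h.1, ih h.2⟩

theorem Dominates.rowInsert_bump {r s : List ℕ} (h : Dominates r s) {x y : ℕ}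
    (hy : (rowInsert x r).2 = some y) : Dominates (rowInsert x r).1 (rowInsert y s).1 := by
  induction r generalizing s with
  | nil => simp at hy
  | cons a r ih =>
    rcases lt_or_ge x a with hxa | hxa
    · rw [rowInsert_cons_of_lt hxa] at hy ⊢
      obtain rfl : a = y := by simpa using hy
      rcases s with _ | ⟨b, s⟩
      · simpa using hxa
      · rw [rowInsert_cons_of_lt h.1]
        exact ⟨hxa, h.2⟩
    · rw [rowInsert_cons_of_le hxa] at hy ⊢
      have hxy := (bump_mem hy).1
      rcases s with _ | ⟨b, s⟩
      · simp; omega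
      · rcases lt_or_ge y b with hyb | hyb
        · rw [rowInsert_cons_of_lt hyb]
          exact ⟨by omega, h.2.rowInsert_left x⟩
        · rw [rowInsert_cons_of_le hyb]
          exact ⟨h.1, ih h.2 hy⟩

theorem IsTableau.tInsert {T : List (List ℕ)} (hT : IsTableau T) (x : ℕ) :
    IsTableau (tInsert x T) := by
  induction T generalizing x with
  | nil => simp [Plactic.tInsert, IsTableau]
  | cons r S ih =>
    obtain ⟨hr, hd, hS, -⟩ := hT
    rw [tInsert_cons]
    refine ⟨rowInsert_sorted hr x, ?_, ?_, List.ne_nil_of_mem (self_mem_rowInsert x r)⟩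
    · rw [tInsertWord_headD]
      rcases h : (rowInsert x r).2 with _ | y
      · exact hd.rowInsert_left x
      · exact hd.rowInsert_bump h
    · rcases (rowInsert x r).2 with _ | y
      · exact hS
      · exact ih hS y

theorem IsTableau.tInsertWord {T : List (List ℕ)} (hT : IsTableau T) (w : List ℕ) :
    IsTableau (tInsertWord T w) := by
  induction w generalizing T with
  | nil => exact hT
  | cons x w ih => exact ih (hT.tInsert x)

theorem isTableau_P (w : List ℕ) : IsTableau (P w) :=
  IsTableau.tInsertWord (T := []) trivial w

theorem P_eq_of_kStep {u v : List ℕ} (h : KStep u v) : P u = P v := by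
  rcases h with ⟨x, y, a, b, c, hab, hbc⟩ | ⟨x, y, a, b, c, hab, hbc⟩
  · rw [P_append, P_append, P_append, P_append,
      tInsertWord_knuthTriple (isTableau_P x) (.k1 a b c hab hbc)]
  · rw [P_append, P_append, P_append, P_append,
      tInsertWord_knuthTriple (isTableau_P x) (.k2 a b c hab hbc)]

theorem P_eq_of_kEquiv {u v : List ℕ} (h : KEquiv u v) : P u = P v := by
  induction h with
  | rel _ _ h => exact P_eq_of_kStep h
  | refl => rfl
  | symm _ _ _ ih => exact ih.symm
  | trans _ _ _ _ _ ih₁ ih₂ => exact ih₁.trans ih₂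

theorem KEquiv.refl (u : List ℕ) : KEquiv u u := Relation.EqvGen.refl u

theorem KEquiv.symm {u v : List ℕ} (h : KEquiv u v) : KEquiv v u := Relation.EqvGen.symm _ _ h

theorem KEquiv.trans {u v w : List ℕ} (h : KEquiv u v) (h' : KEquiv v w) : KEquiv u w :=
  Relation.EqvGen.trans _ _ _ h h'

theorem KEquiv.append {u v : List ℕ} (h : KEquiv u v) (x y : List ℕ) :
    KEquiv (x ++ u ++ y) (x ++ v ++ y) := by
  induction h with
  | rel _ _ h =>
    apply Relation.EqvGen.rel
    rcases h with ⟨x', y', a, b, c, hab, hbc⟩ | ⟨x', y', a, b, c, hab, hbc⟩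
    · simpa using KStep.k1 (x ++ x') (y' ++ y) a b c hab hbc
    · simpa using KStep.k2 (x ++ x') (y' ++ y) a b c hab hbc
  | refl => exact .refl _
  | symm _ _ _ ih => exact ih.symm
  | trans _ _ _ _ _ ih₁ ih₂ => exact ih₁.trans ih₂

theorem KEquiv.append_left {u v : List ℕ} (h : KEquiv u v) (x : List ℕ) :
    KEquiv (x ++ u) (x ++ v) := by simpa using h.append x []

theorem KEquiv.append_right {u v : List ℕ} (h : KEquiv u v) (y : List ℕ) :
    KEquiv (u ++ y) (v ++ y) := h.append [] y

theorem KEquiv.perm {u v : List ℕ} (h : KEquiv u v) : u.Perm v := by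
  induction h with
  | rel _ _ h =>
    rcases h with ⟨x, y, a, b, c, -, -⟩ | ⟨x, y, a, b, c, -, -⟩
    · exact ((List.Perm.swap c a [b]).append_left x).append_right y
    · exact (((List.Perm.swap c a []).cons b).append_left x).append_right y
  | refl => exact .refl _
  | symm _ _ _ ih => exact ih.symm
  | trans _ _ _ _ _ ih₁ ih₂ => exact ih₁.trans ih₂

/-- A letter smaller than every entry of a sorted row moves left past all but its first entry. -/
theorem kEquiv_move_left {x y : ℕ} {r : List ℕ} (hr : (y :: r).Pairwise (· ≤ ·)) (hxy : x < y) :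
    KEquiv (y :: r ++ [x]) (y :: x :: r) := by
  induction r generalizing y with
  | nil => exact .refl _
  | cons z r ih =>
    rw [List.pairwise_cons] at hr
    have hyz : y ≤ z := hr.1 z (by simp)
    exact ((ih hr.2 (hxy.trans_le hyz)).append_left [y]).trans
      (KEquiv.symm (.rel _ _ (by simpa using KStep.k2 [] r x y z hxy hyz)))

theorem kEquiv_rowInsert {r : List ℕ} (hr : r.Pairwise (· ≤ ·)) (x : ℕ) :
    KEquiv (r ++ [x]) ((rowInsert x r).2.toList ++ (rowInsert x r).1) := by
  induction r with
  | nil => exact .refl _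
  | cons y r ih =>
    rcases lt_or_ge x y with hxy | hxy
    · rw [rowInsert_cons_of_lt hxy]
      exact kEquiv_move_left hr hxy
    · rw [List.pairwise_cons] at hr
      rw [rowInsert_cons_of_le hxy]
      refine ((ih hr.2).append_left [y]).trans ?_
      rcases hb : (rowInsert x r).2 with _ | b
      · exact .refl _
      · have hxb := (bump_mem hb).1
        rcases h : (rowInsert x r).1 with _ | ⟨z, s⟩
        · have := self_mem_rowInsert x r
          simp [h] at this
        · have hzx : z ≤ x := by
            have h1 := self_mem_rowInsert x r
            have h2 := rowInsert_sorted hr.2 x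
            rw [h] at h1 h2
            rcases List.mem_cons.1 h1 with rfl | h1
            · exact le_rfl
            · exact (List.pairwise_cons.1 h2).1 x h1
          have hyz : y ≤ z := by
            rcases mem_of_mem_rowInsert (h ▸ List.mem_cons_self : z ∈ (rowInsert x r).1) with
              rfl | h1
            · exact hxy
            · exact hr.1 z h1
          exact .rel _ _ (KStep.k1 [] s y z b hyz (by omega))

theorem kEquiv_reading_tInsert {T : List (List ℕ)} (hT : IsTableau T) (x : ℕ) :
    KEquiv (reading T ++ [x]) (reading (tInsert x T)) := by
  induction T generalizing x with
  | nil => exact .refl _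
  | cons r S ih =>
    rw [tInsert_cons]
    have h := (kEquiv_rowInsert hT.1 x).append_left (reading S)
    rw [← List.append_assoc, ← List.append_assoc] at h
    refine h.trans (KEquiv.append_right ?_ _)
    rcases (rowInsert x r).2 with _ | y
    · simpa using KEquiv.refl _
    · exact ih hT.2.2.1 y

theorem kEquiv_reading_P (w : List ℕ) : KEquiv w (reading (P w)) := by
  induction w using List.reverseRecOn with
  | nil => exact .refl _
  | append_singleton w x ih =>
    rw [P_append]
    exact (ih.append_right [x]).trans (kEquiv_reading_tInsert (isTableau_P w) x)

theorem kEquiv_iff_P_eq {u v : List ℕ} : KEquiv u v ↔ P u = P v :=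
  ⟨P_eq_of_kEquiv, fun h =>
    (kEquiv_reading_P u).trans (h ▸ (kEquiv_reading_P v).symm)⟩

theorem rowInsertWord_of_dominates {r s : List ℕ} (hr : r.Pairwise (· ≤ ·))
    (h : Dominates r s) : rowInsertWord s r = (r, s) := by
  induction r generalizing s with
  | nil => cases s <;> simp_all
  | cons x r ih =>
    rw [List.pairwise_cons] at hr
    rcases s with _ | ⟨y, s⟩
    · rw [rowInsertWord_cons, rowInsert_nil, rowInsertWord_cons_of_le hr.1,
        ih hr.2 (dominates_nil r)]
      rfl
    · rw [rowInsertWord_cons, rowInsert_cons_of_lt h.1, rowInsertWord_cons_of_le hr.1, ih hr.2 h.2]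
      rfl

theorem tInsertWord_row {r : List ℕ} {S : List (List ℕ)} (h : IsTableau (r :: S)) :
    tInsertWord S r = r :: S := by
  induction S generalizing r with
  | nil =>
    obtain ⟨x, r, rfl⟩ := List.exists_cons_of_ne_nil h.2.2.2
    rw [show tInsertWord [] (x :: r) = tInsertWord [[]] (x :: r) from rfl, tInsertWord_cons,
      rowInsertWord_of_dominates h.1 (dominates_nil _)]
    rfl
  | cons s S ih =>
    rw [tInsertWord_cons, rowInsertWord_of_dominates h.1 (show Dominates r s from h.2.1)]
    exact congrArg (r :: ·) (ih h.2.2.1)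

theorem tInsertWord_tail_headD {S : List (List ℕ)} (h : IsTableau S) :
    tInsertWord S.tail (S.headD []) = S := by
  rcases S with _ | ⟨r, S⟩
  · rfl
  · exact tInsertWord_row h

theorem P_reading {T : List (List ℕ)} (h : IsTableau T) : P (reading T) = T := by
  induction T with
  | nil => rfl
  | cons r S ih => rw [reading, P_append, ih h.2.2.1, tInsertWord_row h]

/-- Prefixing a word with a minimal letter adds that letter to the first row. -/
theorem P_cons_of_le {a : ℕ} {w : List ℕ} (h : ∀ x ∈ w, a ≤ x) :
    P (a :: w) = (a :: (P w).headD []) :: (P w).tail := by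
  rw [show P (a :: w) = tInsertWord [[a]] w from rfl, tInsertWord_cons,
    rowInsertWord_cons_of_le h]
  rcases w with _ | ⟨x, w⟩
  · rfl
  · rw [show P (x :: w) = tInsertWord [[]] (x :: w) from rfl, tInsertWord_cons]
    rfl

theorem le_of_mem_of_dominates {r s : List ℕ} {a : ℕ} (h : Dominates r s) (hr : ∀ x ∈ r, a ≤ x) :
    ∀ x ∈ s, a + 1 ≤ x := by
  induction r generalizing s with
  | nil => cases s <;> simp_all
  | cons y r ih =>
    rcases s with _ | ⟨z, s⟩
    · simp
    · have h1 := hr y (by simp)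
      have h2 := ih h.2 (fun x hx => hr x (by simp [hx]))
      have h3 := h.1
      intro x hx
      rcases List.mem_cons.1 hx with rfl | hx
      · omega
      · exact h2 x hx

theorem lt_of_mem_reading {r : List ℕ} {S : List (List ℕ)} {a : ℕ} (h : IsTableau (r :: S))
    (hr : ∀ x ∈ r, a ≤ x) : ∀ x ∈ reading S, a + 1 ≤ x := by
  induction S generalizing r a with
  | nil => simp [reading]
  | cons s S ih =>
    have hs := le_of_mem_of_dominates (show Dominates r s from h.2.1) hr
    intro x hx
    rcases List.mem_append.1 hx with hx | hx
    · have := ih h.2.2.1 hs x hx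
      omega
    · exact hs x hx

/-- The insertion tableau of `12w`, in terms of the rows of the insertion tableau of `w`. -/
theorem P_one_two_append_reading {r : List ℕ} {S : List (List ℕ)} (h : IsTableau (r :: S))
    (hr : ∀ x ∈ r, 1 ≤ x) :
    P ([1, 2] ++ reading (r :: S)) =
      (1 :: (rowInsertWord (2 :: S.headD []) r).1) ::
        tInsertWord S.tail (rowInsertWord (2 :: S.headD []) r).2 := by
  have hS := lt_of_mem_reading h hr
  have h2 : P (2 :: (reading S ++ r)) = (rowInsertWord (2 :: S.headD []) r).1 ::
      tInsertWord S.tail (rowInsertWord (2 :: S.headD []) r).2 := by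
    rw [← List.cons_append, P_append, P_cons_of_le hS, P_reading h.2.2.1, tInsertWord_cons]
  rw [show [1, 2] ++ reading (r :: S) = 1 :: 2 :: (reading S ++ r) from rfl, P_cons_of_le, h2]
  · rfl
  · simp only [List.mem_cons, List.mem_append]
    rintro x (rfl | hx | hx)
    · omega
    · have := hS x hx
      omega
    · exact hr x hx

theorem rowInsertWord_length (r w : List ℕ) :
    (rowInsertWord r w).1.length + (rowInsertWord r w).2.length = r.length + w.length := by
  have single (x : ℕ) (r : List ℕ) :
      (rowInsert x r).1.length + (rowInsert x r).2.toList.length = r.length + 1 := by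
    induction r with
    | nil => rfl
    | cons y r ih =>
      rcases lt_or_ge x y with hxy | hxy
      · simp [rowInsert_cons_of_lt hxy]
      · simp only [rowInsert_cons_of_le hxy, List.length_cons]
        omega
  induction w generalizing r with
  | nil => simp
  | cons x w ih =>
    have h1 := single x r
    have h2 := ih (rowInsert x r).1
    simp only [rowInsertWord_cons, List.length_append, List.length_cons]
    omega

theorem rowInsertWord_append (r u v : List ℕ) :
    rowInsertWord r (u ++ v) = ((rowInsertWord (rowInsertWord r u).1 v).1,
      (rowInsertWord r u).2 ++ (rowInsertWord (rowInsertWord r u).1 v).2) := by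
  induction u generalizing r with
  | nil => rfl
  | cons x u ih => simp [ih]

/-- Inserting a weakly increasing word bumps a sublist of the original row. -/
theorem bumps_sublist {w : List ℕ} (hw : w.Pairwise (· ≤ ·)) (r : List ℕ) :
    (rowInsertWord r w).2.Sublist r := by
  induction r generalizing w with
  | nil => simp [rowInsertWord_of_dominates hw (dominates_nil w)]
  | cons y r ih =>
    rcases w with _ | ⟨x, w⟩
    · simp
    have hxw := List.pairwise_cons.1 hw
    rcases lt_or_ge x y with hxy | hxy
    · rw [rowInsertWord_cons, rowInsert_cons_of_lt hxy, rowInsertWord_cons_of_le hxw.1]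
      exact (ih hxw.2).cons_cons y
    · rw [rowInsertWord_cons_of_le]
      · exact (ih hw).cons y
      · intro z hz
        rcases List.mem_cons.1 hz with rfl | hz
        · exact hxy
        · exact hxy.trans (hxw.1 z hz)

/-- Inserting a weakly increasing word yields a row at least as long as the word. -/
theorem length_le_rowInsertWord {w : List ℕ} (hw : w.Pairwise (· ≤ ·)) (r : List ℕ) :
    w.length ≤ (rowInsertWord r w).1.length := by
  have h1 := rowInsertWord_length r w
  have h2 := (bumps_sublist hw r).length_le
  omega

theorem rowInsertWord_replicate_append {a : ℕ} {w : List ℕ} (hw : ∀ x ∈ w, a ≤ x) (p : ℕ)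
    (r : List ℕ) : rowInsertWord (List.replicate p a ++ r) w =
      (List.replicate p a ++ (rowInsertWord r w).1, (rowInsertWord r w).2) := by
  induction p with
  | zero => rfl
  | succ p ih =>
    rw [List.replicate_succ, List.cons_append, rowInsertWord_cons_of_le hw, ih]
    rfl

theorem rowInsertWord_replicate {a : ℕ} {r : List ℕ} (hr : ∀ x ∈ r, a < x) (p : ℕ) :
    rowInsertWord r (List.replicate p a) = (List.replicate p a ++ r.drop p, r.take p) := by
  induction p generalizing r with
  | zero => simp
  | succ p ih =>
    have hle : ∀ x ∈ List.replicate p a, a ≤ x := fun x hx => (List.eq_of_mem_replicate hx).ge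
    rcases r with _ | ⟨y, r⟩
    · rw [List.replicate_succ, rowInsertWord_cons, rowInsert_nil, rowInsertWord_cons_of_le hle,
        ih (by simp)]
      simp
    · rw [List.replicate_succ, rowInsertWord_cons, rowInsert_cons_of_lt (hr y (by simp)),
        rowInsertWord_cons_of_le hle, ih (fun x hx => hr x (by simp [hx]))]
      simp

theorem rowInsertWord_of_forall_le {r w : List ℕ} (hw : w.Pairwise (· ≤ ·))
    (h : ∀ x ∈ w, ∀ y ∈ r, y ≤ x) : rowInsertWord r w = (r ++ w, []) := by
  induction r with
  | nil => simp [rowInsertWord_of_dominates hw (dominates_nil w)]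
  | cons y r ih =>
    rw [rowInsertWord_cons_of_le (fun x hx => h x hx y (by simp)),
      ih (fun x hx z hz => h x hx z (by simp [hz]))]
    rfl

theorem rowInsert_eq_of_forall_le {r : List ℕ} {x : ℕ} (h : ∀ y ∈ r, y ≤ x) :
    rowInsert x r = (r ++ [x], none) := by
  induction r with
  | nil => rfl
  | cons y r ih =>
    rw [rowInsert_cons_of_le (h y (by simp)), ih (fun z hz => h z (by simp [hz]))]
    rfl

theorem forall_le_of_bump_eq_none {r : List ℕ} (hr : r.Pairwise (· ≤ ·)) {x : ℕ}
    (h : (rowInsert x r).2 = none) : ∀ y ∈ r, y ≤ x := by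
  intro y hy
  by_contra! hlt
  obtain ⟨z, hz, -⟩ := exists_bump_of_mem hr hy hlt
  simp [h] at hz

theorem exists_replicate_append {a : ℕ} {r : List ℕ} (hr : r.Pairwise (· ≤ ·))
    (h : ∀ x ∈ r, a ≤ x) : ∃ p t, r = List.replicate p a ++ t ∧ ∀ x ∈ t, a < x := by
  induction r with
  | nil => exact ⟨0, [], by simp⟩
  | cons y r ih =>
    rw [List.pairwise_cons] at hr
    rcases (h y (by simp)).eq_or_lt with rfl | hlt
    · obtain ⟨p, t, rfl, ht⟩ := ih hr.2 (fun x hx => h x (by simp [hx]))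
      exact ⟨p + 1, t, rfl, ht⟩
    · refine ⟨0, y :: r, rfl, fun x hx => ?_⟩
      rcases List.mem_cons.1 hx with rfl | hx
      · exact hlt
      · exact hlt.trans_le (hr.1 x hx)

/-- The first two rows `r`, `s` of the tableaux of words commuting with `12`. -/
def CommutingRows (r s : List ℕ) : Prop :=
  ∃ p q k, r = List.replicate p 1 ++ List.replicate q 2 ∧ s = List.replicate k 2 ∧
    (p = k ∧ q = 0 ∨ k < p ∧ 0 < q)

theorem commutingRows_of_eq {r : List ℕ} {S : List (List ℕ)} (h : IsTableau (r :: S))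
    (hr : ∀ x ∈ r, 1 ≤ x)
    (h1 : 1 :: (rowInsertWord (2 :: S.headD []) r).1 = (rowInsertWord r [1, 2]).1)
    (h2 : tInsertWord S.tail (rowInsertWord (2 :: S.headD []) r).2 =
      tInsertWord S (rowInsertWord r [1, 2]).2) : CommutingRows r (S.headD []) := by
  have hs2 := le_of_mem_of_dominates h.2.1 hr
  have hs : (S.headD []).Pairwise (· ≤ ·) := by
    rcases S with _ | ⟨s, S⟩
    · exact .nil
    · exact h.2.2.1.1
  replace h2 := congrArg (fun T => (T.headD []).length) h2
  simp only [tInsertWord_headD] at h2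
  generalize S.headD [] = s at *
  have hs' : (2 :: s).Pairwise (· ≤ ·) := List.pairwise_cons.2 ⟨hs2, hs⟩
  have h3 := length_le_rowInsertWord (hs'.sublist (bumps_sublist h.1 (2 :: s)))
    (S.tail.headD [])
  have h4 := rowInsertWord_length (2 :: s) r
  have h5 := rowInsertWord_length r [1, 2]
  have h6 := rowInsertWord_length s (rowInsertWord r [1, 2]).2
  have h7 := congrArg List.length h1
  simp only [List.length_cons, List.length_nil] at h4 h5 h7
  have hm : (rowInsertWord (2 :: s) r).2.length =
    s.length + (rowInsertWord r [1, 2]).2.length := by omega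
  have hb : (rowInsertWord s (rowInsertWord r [1, 2]).2).2 = [] :=
    List.eq_nil_of_length_eq_zero (by omega)
  clear h2 h3 h4 h5 h6 h7
  have hsort := h.1
  obtain ⟨p, t, rfl, ht⟩ := exists_replicate_append h.1 hr
  have hgt : ∀ x ∈ 2 :: s, 1 < x := by
    intro x hx
    rcases List.mem_cons.1 hx with rfl | hx
    · omega
    · exact hs2 x hx
  have htsort : t.Pairwise (· ≤ ·) := (List.pairwise_append.1 hsort).2.1
  rw [rowInsertWord_replicate_append (by simp)] at h1 hm hb
  rw [rowInsertWord_append, rowInsertWord_replicate hgt] at h1 hm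
  rcases t with _ | ⟨e, t⟩
  · simp only [rowInsertWord_nil, List.append_nil, rowInsertWord_cons, rowInsert_nil] at h1 hm
    rw [← List.cons_append, ← List.replicate_succ, List.replicate_succ'] at h1
    have hd : (2 :: s).drop p = [2] := by
      simpa [rowInsert] using h1
    have hlen : s.length = p := by
      have := congrArg List.length hd
      simp at this
      omega
    refine ⟨p, 0, p, by simp, ?_, Or.inl ⟨rfl, rfl⟩⟩
    rw [← hlen]
    refine List.eq_replicate_of_mem fun x hx => le_antisymm ?_ (hs2 x hx)
    rw [← List.take_append_drop p (2 :: s), hd] at hs'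
    have hx' : x ∈ (2 :: s).take p ++ (2 :: s).drop p := by
      rw [List.take_append_drop]; simp [hx]
    rw [hd] at hx'
    rcases List.mem_append.1 hx' with hx' | hx'
    · exact (List.pairwise_append.1 hs').2.2 x hx' 2 (by simp)
    · simp at hx'
      omega
  · have he : 1 < e := ht e (by simp)
    have het := List.pairwise_cons.1 htsort
    have hB : rowInsertWord (e :: t) [1, 2] =
        (1 :: (rowInsert 2 t).1, e :: (rowInsert 2 t).2.toList) := by
      simp [rowInsert_cons_of_lt he, rowInsert_cons_of_le one_le_two]
    rw [hB] at h1 hm hb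
    simp only [rowInsertWord_cons, List.append_eq_nil_iff, Option.toList_eq_nil_iff] at hb
    have hse := forall_le_of_bump_eq_none hs hb.1
    have hle : ∀ x ∈ e :: t, ∀ y ∈ List.replicate p 1 ++ (2 :: s).drop p, y ≤ x := by
      intro x hx y hy
      have hex : e ≤ x := by
        rcases List.mem_cons.1 hx with rfl | hx
        · exact le_rfl
        · exact het.1 x hx
      rcases List.mem_append.1 hy with hy | hy
      · rw [List.eq_of_mem_replicate hy]; omega
      · rcases List.mem_cons.1 (List.mem_of_mem_drop hy) with rfl | hy
        · omega
        · exact (hse y hy).trans hex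
    rw [rowInsertWord_of_forall_le htsort hle] at h1 hm
    simp only [List.append_nil, List.length_take, List.length_cons] at h1 hm
    have hnone : (rowInsert 2 t).2 = none := by
      rcases hz : (rowInsert 2 t).2 with _ | z
      · rfl
      · simp [hz] at hm
        omega
    have ht2 := forall_le_of_bump_eq_none het.2 hnone
    rw [hnone] at hm
    simp only [Option.toList_none, List.length_nil] at hm
    rw [List.drop_eq_nil_of_le (by simp; omega), List.append_nil,
      rowInsert_eq_of_forall_le ht2, ← List.cons_append, ← List.replicate_succ,
      List.replicate_succ', List.append_assoc] at h1
    have h3 : e :: t = t ++ [2] := by simpa using h1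
    have h4 : ∀ x ∈ e :: t, x = 2 := by
      intro x hx
      refine le_antisymm ?_ (ht x hx)
      rw [h3] at hx
      rcases List.mem_append.1 hx with hx | hx
      · exact ht2 x hx
      · simp at hx
        omega
    refine ⟨p, (e :: t).length, s.length, ?_, ?_, Or.inr ⟨by omega, by simp⟩⟩
    · rw [← List.eq_replicate_of_mem h4]
    · refine List.eq_replicate_of_mem fun x hx => le_antisymm ?_ (hs2 x hx)
      rw [← h4 e (by simp)]
      exact hse x hx

theorem CommutingRows.rowInsertWord_eq {r : List ℕ} {S : List (List ℕ)} (h : IsTableau S)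
    (hrs : CommutingRows r (S.headD [])) :
    1 :: (rowInsertWord (2 :: S.headD []) r).1 = (rowInsertWord r [1, 2]).1 ∧
    tInsertWord S.tail (rowInsertWord (2 :: S.headD []) r).2 =
      tInsertWord S (rowInsertWord r [1, 2]).2 := by
  obtain ⟨p, q, k, rfl, hk, hpq⟩ := hrs
  have hS := tInsertWord_tail_headD h
  rw [hk] at hS ⊢
  rw [← List.replicate_succ, rowInsertWord_replicate_append (by simp), rowInsertWord_append,
    rowInsertWord_replicate (a := 1) (by simp), List.drop_replicate, List.take_replicate]
  rcases hpq with ⟨rfl, rfl⟩ | ⟨hkp, hq⟩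
  · simp only [List.replicate_zero, rowInsertWord_nil, List.append_nil]
    rw [show min p (p + 1) = p by omega, show p + 1 - p = 1 by omega, hS, ← List.cons_append,
      ← List.replicate_succ, List.replicate_succ']
    simp [rowInsert]
  · rw [show min p (k + 1) = k + 1 by omega, show k + 1 - p = 0 by omega]
    obtain ⟨q, rfl⟩ := Nat.exists_eq_add_of_lt hq
    have hB : rowInsertWord (List.replicate (q + 1) 2) [1, 2] =
        (1 :: List.replicate (q + 1) 2, [2]) := by
      simp only [List.replicate_succ, rowInsertWord_cons, rowInsert_cons_of_lt one_lt_two,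
        rowInsert_cons_of_le one_le_two, rowInsertWord_nil]
      rw [rowInsert_eq_of_forall_le (fun y hy => (List.eq_of_mem_replicate hy).le),
        ← List.replicate_succ', List.replicate_succ]
      rfl
    rw [rowInsertWord_of_forall_le (List.pairwise_replicate.2 (Or.inr le_rfl))
      (by simp), zero_add, hB]
    constructor
    · simp only [List.replicate_zero, List.append_nil]
      rw [← List.cons_append, ← List.replicate_succ, List.replicate_succ']
      simp
    · rw [List.append_nil, List.replicate_succ', tInsertWord_append, hS]

theorem mem_cent_iff_commutingRows {w r : List ℕ} {S : List (List ℕ)} (hw : ∀ x ∈ w, 0 < x)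
    (hP : P w = r :: S) : w ∈ Cent [1, 2] ↔ CommutingRows r (S.headD []) := by
  have hT : IsTableau (r :: S) := hP ▸ isTableau_P w
  have hread : KEquiv w (reading (r :: S)) := hP ▸ kEquiv_reading_P w
  have hr : ∀ x ∈ r, 1 ≤ x := fun x hx =>
    hw x (hread.perm.mem_iff.2 (List.mem_append_right _ hx))
  rw [show w ∈ Cent [1, 2] ↔ KEquiv ([1, 2] ++ w) (w ++ [1, 2]) from Iff.rfl, kEquiv_iff_P_eq,
    P_eq_of_kEquiv (hread.append_left [1, 2]), P_append w, hP, P_one_two_append_reading hT hr,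
    tInsertWord_cons, List.cons_eq_cons]
  exact ⟨fun h => commutingRows_of_eq hT hr h.1 h.2, fun h => h.rowInsertWord_eq hT.2.2.1⟩

theorem col_eq_headD (T : List (List ℕ)) (j : ℕ) :
    col T j = (T.headD [])[j]?.toList ++ col T.tail j := by
  rcases T with _ | ⟨r, S⟩
  · simp [col]
  · rcases h : r[j]? with _ | x <;> simp [col, h]

theorem Dominates.exists_getElem? {r s : List ℕ} (h : Dominates r s) {j y : ℕ}
    (hy : s[j]? = some y) : ∃ x, r[j]? = some x ∧ x < y := by
  induction r generalizing s j with
  | nil => cases s <;> simp_all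
  | cons a r ih =>
    rcases s with _ | ⟨b, s⟩
    · simp at hy
    rcases j with _ | j
    · have := h.1
      simp_all
    · simpa using ih h.2 (by simpa using hy)

theorem Dominates.length_le {r s : List ℕ} (h : Dominates r s) : s.length ≤ r.length := by
  by_contra! hlt
  obtain ⟨x, hx, -⟩ := h.exists_getElem? (List.getElem?_eq_getElem hlt)
  simp at hx

/-- Columns of a tableau strictly increase. -/
theorem lt_of_mem_col {r : List ℕ} {S : List (List ℕ)} (h : IsTableau (r :: S)) {j y : ℕ}
    (hy : y ∈ col S j) : ∃ x, r[j]? = some x ∧ x < y := by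
  induction S generalizing r with
  | nil => simp [col] at hy
  | cons s S ih =>
    have hd : Dominates r s := h.2.1
    rw [col_eq_headD, List.mem_append, Option.mem_toList] at hy
    rcases hy with hy | hy
    · exact hd.exists_getElem? hy
    · obtain ⟨z, hz, hzy⟩ := ih h.2.2.1 hy
      obtain ⟨x, hx, hxz⟩ := hd.exists_getElem? hz
      exact ⟨x, hx, hxz.trans hzy⟩

theorem lt_of_mem_col_tail {S : List (List ℕ)} (h : IsTableau S) {j y : ℕ}
    (hy : y ∈ col S.tail j) : ∃ x, (S.headD [])[j]? = some x ∧ x < y := by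
  rcases S with _ | ⟨s, S⟩
  · simp [col] at hy
  · exact lt_of_mem_col h hy

theorem col_eq_of_le {r : List ℕ} {S : List (List ℕ)} (h : IsTableau (r :: S)) {j : ℕ}
    (hj : (S.headD []).length ≤ j) : col (r :: S) j = r[j]?.toList := by
  have hnone : (S.headD [])[j]? = none := by simpa using hj
  have htail : col S.tail j = [] := List.eq_nil_iff_forall_not_mem.2 fun y hy => by
    obtain ⟨x, hx, -⟩ := lt_of_mem_col_tail h.2.2.1 hy
    rw [hnone] at hx
    cases hx
  rw [col_eq_headD, List.tail_cons, col_eq_headD S, hnone, htail]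
  simp

theorem col_eq_of_lt {r : List ℕ} {S : List (List ℕ)} (h : IsTableau (r :: S)) {j : ℕ}
    (hj : j < (S.headD []).length) : ∃ x y, r[j]? = some x ∧ (S.headD [])[j]? = some y ∧ x < y ∧
      col (r :: S) j = x :: y :: col S.tail j ∧ ∀ z ∈ col S.tail j, y < z := by
  have hy := List.getElem?_eq_getElem hj
  obtain ⟨x, hx, hxy⟩ := h.2.1.exists_getElem? hy
  refine ⟨x, _, hx, hy, hxy, ?_, fun z hz => ?_⟩
  · rw [col_eq_headD, List.tail_cons, col_eq_headD S, hy]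
    simp [hx]
  · obtain ⟨y, hy', hyz⟩ := lt_of_mem_col_tail h.2.2.1 hz
    rw [hy] at hy'
    simp_all

theorem commutingRows_iff_col {r : List ℕ} {S : List (List ℕ)} (h : IsTableau (r :: S))
    (hr : ∀ x ∈ r, 1 ≤ x) :
    CommutingRows r (S.headD []) ↔
      ((∀ j, (col (r :: S) j).length = 1 → col (r :: S) j = [1] ∨ col (r :: S) j = [2]) ∧
        ((∃ j, (col (r :: S) j).length = 1) →
          (∃ j, col (r :: S) j = [1]) ∧ (∃ j, col (r :: S) j = [2]))) ∧
      (∀ j, 2 ≤ (col (r :: S) j).length → 1 ∈ col (r :: S) j ∧ 2 ∈ col (r :: S) j) := by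
  have hlen := h.2.1.length_le
  constructor
  · rintro ⟨p, q, k, rfl, hk, hpq⟩
    have hk' : (S.headD []).length = k := by rw [hk, List.length_replicate]
    have hge (j : ℕ) (hj : k ≤ j) := col_eq_of_le h (hk'.trans_le hj)
    have hlt (j : ℕ) (hj : j < k) := col_eq_of_lt h (hj.trans_eq hk'.symm)
    have hsingle (j : ℕ) (hj : (col ((List.replicate p 1 ++ List.replicate q 2) :: S) j).length
        = 1) : k ≤ j ∧ j < p + q := by
      have hkj : k ≤ j := by
        by_contra! hjk
        obtain ⟨x, y, -, -, -, he, -⟩ := hlt j hjk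
        simp [he] at hj
      refine ⟨hkj, ?_⟩
      by_contra! hpj
      rw [hge j hkj, List.getElem?_eq_none (by simpa using hpj)] at hj
      simp at hj
    refine ⟨⟨fun j hj => ?_, fun ⟨j, hj⟩ => ?_⟩, fun j hj => ?_⟩
    · obtain ⟨h1, h2⟩ := hsingle j hj
      rw [hge j h1]
      rcases lt_or_ge j p with hjp | hjp
      · left
        simp [List.getElem?_append, hjp]
      · right
        simp [List.getElem?_append, not_lt.2 hjp, List.getElem?_replicate]
        omega
    · obtain ⟨h1, h2⟩ := hsingle j hj
      obtain ⟨hkp, hq⟩ : k < p ∧ 0 < q := by omega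
      refine ⟨⟨k, ?_⟩, ⟨p, ?_⟩⟩
      · rw [hge k le_rfl]
        simp [List.getElem?_append, hkp]
      · rw [hge p hkp.le]
        simp [hq]
    · have hjk : j < k := by
        by_contra! hjk
        rw [hge j hjk] at hj
        have := Option.length_toList_le (o := (List.replicate p 1 ++ List.replicate q 2)[j]?)
        omega
      obtain ⟨x, y, hx, hy, -, he, -⟩ := hlt j hjk
      rw [List.getElem?_append_left (by simp; omega), List.getElem?_replicate_of_lt (by omega)] at hx
      rw [hk, List.getElem?_replicate_of_lt hjk] at hy
      simp_all
  · rintro ⟨⟨ha, hex⟩, hb⟩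
    have hlt (j : ℕ) (hj : j < (S.headD []).length) :
        r[j]? = some 1 ∧ (S.headD [])[j]? = some 2 := by
      obtain ⟨x, y, hx, hy, hxy, he, hz⟩ := col_eq_of_lt h hj
      have hx1 := hr x (List.mem_of_getElem? hx)
      obtain ⟨h1, h2⟩ := hb j (by simp [he])
      rw [he] at h1 h2
      have hnot (a : ℕ) (ha : a ≤ y) : a ∉ col S.tail j := fun hm => by
        have := hz a hm
        omega
      simp only [List.mem_cons] at h1 h2
      have h1' : 1 = x := by
        have := hnot 1 (by omega)
        simp only [this, or_false] at h1
        omega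
      have h2' : 2 = y := by
        have := hnot 2 (by omega)
        simp only [this, or_false] at h2
        omega
      rw [hx, hy, ← h1', ← h2']
      simp
    have hge (j : ℕ) (hj : (S.headD []).length ≤ j) := col_eq_of_le h hj
    have hr2 : ∀ x ∈ r, x ≤ 2 := by
      intro x hx
      obtain ⟨j, hj⟩ := List.mem_iff_getElem?.1 hx
      rcases lt_or_ge j (S.headD []).length with hjk | hjk
      · have := (hlt j hjk).1
        rw [hj, Option.some_inj] at this
        omega
      · have := ha j (by simp [hge j hjk, hj])
        rw [hge j hjk, hj] at this
        simp at this
        omega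
    have hs2 : S.headD [] = List.replicate (S.headD []).length 2 := by
      refine List.eq_replicate_of_mem fun x hx => ?_
      obtain ⟨j, hj⟩ := List.mem_iff_getElem?.1 hx
      have := (hlt j (List.getElem?_eq_some_iff.1 hj).1).2
      simp_all
    have hsing (a j : ℕ) (hj : col (r :: S) j = [a]) :
        (S.headD []).length ≤ j ∧ r[j]? = some a := by
      have hkj : (S.headD []).length ≤ j := by
        by_contra! hjk
        obtain ⟨x, y, -, -, -, he, -⟩ := col_eq_of_lt h hjk
        simp [he] at hj
      rw [hge j hkj] at hj
      exact ⟨hkj, by simpa [Option.toList_eq_singleton_iff] using hj⟩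
    obtain ⟨p, t, rfl, ht⟩ := exists_replicate_append h.1 hr
    obtain ⟨q, rfl⟩ : ∃ q, t = List.replicate q 2 :=
      ⟨t.length, List.eq_replicate_of_mem fun x hx =>
        le_antisymm (hr2 x (List.mem_append_right _ hx)) (ht x hx)⟩
    have hget1 (j : ℕ) (hj : (List.replicate p 1 ++ List.replicate q 2)[j]? = some 1) : j < p := by
      by_contra! hpj
      rw [List.getElem?_append_right (by simpa using hpj)] at hj
      have := List.eq_of_mem_replicate (List.mem_of_getElem? hj)
      omega
    have hget2 (j : ℕ) (hj : (List.replicate p 1 ++ List.replicate q 2)[j]? = some 2) : 0 < q := by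
      have := List.mem_of_getElem? hj
      simp at this
      omega
    refine ⟨p, q, (S.headD []).length, rfl, hs2, ?_⟩
    generalize S.headD [] = s at *
    have hkp : s.length ≤ p := by
      by_contra! hpk
      exact absurd (hget1 p (hlt p hpk).1) (lt_irrefl p)
    simp only [List.length_append, List.length_replicate] at hlen
    rcases hlen.eq_or_lt with heq | hlt'
    · left
      omega
    · right
      obtain ⟨⟨i, hi⟩, ⟨j, hj⟩⟩ := hex ⟨s.length, by
        rw [hge _ le_rfl, List.getElem?_eq_getElem (by simpa using hlt')]
        rfl⟩
      have hi' := hsing 1 i hi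
      exact ⟨hi'.1.trans_lt (hget1 i hi'.2), hget2 j (hsing 2 j hj).2⟩

end Plactic

open Plactic in
theorem stmt_9 (w : List ℕ) (hw : ∀ x ∈ w, 0 < x) :
    w ∈ Cent [1, 2] ↔
      ((∀ j, (col (P w) j).length = 1 → col (P w) j = [1] ∨ col (P w) j = [2]) ∧
        ((∃ j, (col (P w) j).length = 1) →
          (∃ j, col (P w) j = [1]) ∧ (∃ j, col (P w) j = [2]))) ∧
      (∀ j, 2 ≤ (col (P w) j).length → 1 ∈ col (P w) j ∧ 2 ∈ col (P w) j) := by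
  rcases hP : P w with _ | ⟨r, S⟩
  · have hread : KEquiv w [] := by simpa [hP, reading] using kEquiv_reading_P w
    obtain rfl : w = [] := hread.perm.eq_nil
    exact iff_of_true (KEquiv.refl _) (by simp [col])
  · have hread := (kEquiv_reading_P w).perm
    rw [hP] at hread
    rw [mem_cent_iff_commutingRows hw hP]
    exact commutingRows_iff_col (hP ▸ isTableau_P w) fun x hx =>
      hw x (hread.mem_iff.2 (List.mem_append_right _ hx))
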